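/- arXiv:2605.04917 — 5 statements merged into one kernel-verified Lean document; each statement's English description precedes it below -/
import Mathlib

section
/- Let σ : ℝ^{n_r} → ℝ^{n_r} be Lipschitz with constant L_σ, and let W_res ∈ ℝ^{n_r×n_r}, W_in ∈ ℝ^{n_r×n_v} satisfy L_σ·‖W_res‖ < 1. Then for every bounded input sequence v : ℤ → ℝ^{n_v} there exists a unique bounded sequence r : ℤ → ℝ^{n_r} satisfying r_k = σ(W_res r_{k-1} + W_in v_k) for all k ∈ ℤ. -/
open scoped NNReal

/-- **Well-posed reservoir lifting (existence and uniqueness).**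
If the activation `σ` is Lipschitz with constant `Lσ` and `Lσ * ‖W_res‖ < 1`
(spectral/operator norm), then for every bounded input sequence `v : ℤ → ℝ^{n_v}`
there exists a unique bounded sequence `r : ℤ → ℝ^{n_r}` satisfying
`r k = σ (W_res (r (k-1)) + W_in (v k))` for all `k ∈ ℤ`. -/
theorem reservoir_unique_bounded_trajectory {nr nv : ℕ}
    (σ : EuclideanSpace ℝ (Fin nr) → EuclideanSpace ℝ (Fin nr)) (Lσ : ℝ≥0)
    (hσ : LipschitzWith Lσ σ)
    (Wres : EuclideanSpace ℝ (Fin nr) →L[ℝ] EuclideanSpace ℝ (Fin nr))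
    (Win : EuclideanSpace ℝ (Fin nv) →L[ℝ] EuclideanSpace ℝ (Fin nr))
    (hcontr : (Lσ : ℝ) * ‖Wres‖ < 1)
    (v : ℤ → EuclideanSpace ℝ (Fin nv))
    (hv : ∃ M : ℝ, ∀ k : ℤ, ‖v k‖ ≤ M) :
    ∃! r : ℤ → EuclideanSpace ℝ (Fin nr),
      (∃ M : ℝ, ∀ k : ℤ, ‖r k‖ ≤ M) ∧
      (∀ k : ℤ, r k = σ (Wres (r (k - 1)) + Win (v k))) := by
  obtain ⟨M, hM⟩ := hv
  have hlip : ∀ x y : EuclideanSpace ℝ (Fin nr), ∀ u : EuclideanSpace ℝ (Fin nr),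
      dist (σ (Wres x + u)) (σ (Wres y + u)) ≤ (Lσ * ‖Wres‖) * dist x y := by
    intro x y u
    calc dist (σ (Wres x + u)) (σ (Wres y + u)) ≤ Lσ * dist (Wres x + u) (Wres y + u) :=
          hσ.dist_le_mul _ _
      _ = Lσ * ‖Wres (x - y)‖ := by rw [dist_add_right, dist_eq_norm, map_sub]
      _ ≤ Lσ * (‖Wres‖ * ‖x - y‖) := by gcongr; exact Wres.le_opNorm _
      _ = _ := by rw [dist_eq_norm]; ring
  have hbd : ∀ r : BoundedContinuousFunction ℤ (EuclideanSpace ℝ (Fin nr)), ∀ k : ℤ,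
      ‖σ (Wres (r (k - 1)) + Win (v k))‖ ≤ ‖σ 0‖ + Lσ * (‖Wres‖ * ‖r‖ + ‖Win‖ * M) := by
    intro r k
    have h1 : ‖σ (Wres (r (k - 1)) + Win (v k)) - σ 0‖
        ≤ Lσ * ‖Wres (r (k - 1)) + Win (v k)‖ := by
      simpa [dist_eq_norm] using hσ.dist_le_mul (Wres (r (k - 1)) + Win (v k)) 0
    have h2 : ‖Wres (r (k - 1)) + Win (v k)‖ ≤ ‖Wres‖ * ‖r‖ + ‖Win‖ * M :=
      (norm_add_le _ _).trans (add_le_add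
        (Wres.le_opNorm_of_le (r.norm_coe_le_norm _)) (Win.le_opNorm_of_le (hM k)))
    have h3 := mul_le_mul_of_nonneg_left h2 Lσ.coe_nonneg
    have h4 := norm_le_norm_add_norm_sub' (σ (Wres (r (k - 1)) + Win (v k))) (σ 0)
    linarith
  let F : BoundedContinuousFunction ℤ (EuclideanSpace ℝ (Fin nr)) →
      BoundedContinuousFunction ℤ (EuclideanSpace ℝ (Fin nr)) := fun r =>
    BoundedContinuousFunction.ofNormedAddCommGroupDiscrete
      (fun k => σ (Wres (r (k - 1)) + Win (v k))) _ (hbd r)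
  have hF : ContractingWith (Lσ * ‖Wres‖₊) F := by
    refine ⟨by exact_mod_cast hcontr, LipschitzWith.of_dist_le_mul fun r s => ?_⟩
    refine (BoundedContinuousFunction.dist_le (by positivity)).2 fun k => ?_
    refine (hlip (r (k - 1)) (s (k - 1)) (Win (v k))).trans ?_
    push_cast
    exact mul_le_mul_of_nonneg_left (BoundedContinuousFunction.dist_coe_le_dist _)
      (by positivity)
  refine ⟨⇑(ContractingWith.fixedPoint F hF), ⟨⟨_, (ContractingWith.fixedPoint F hF).norm_coe_le_norm⟩, fun k => ?_⟩, ?_⟩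
  · exact (DFunLike.congr_fun hF.fixedPoint_isFixedPt k).symm
  · rintro s ⟨⟨C, hC⟩, hs⟩
    let s' := BoundedContinuousFunction.ofNormedAddCommGroupDiscrete s C hC
    have hfix : Function.IsFixedPt F s' := by
      ext1 k
      exact (hs k).symm
    exact congrArg DFunLike.coe (hF.fixedPoint_unique hfix)
end

section
/- Let σ : ℝ^{n_r} → ℝ^{n_r} be Lipschitz with constant L_σ, and let W_res, W_in satisfy L_σ·‖W_res‖ < 1. Let v, ṽ : ℤ → ℝ^{n_v} be bounded input sequences and let r, r̃ : ℤ → ℝ^{n_r} be the corresponding unique bounded trajectories satisfying r_k = σ(W_res r_{k-1} + W_in v_k) and r̃_k = σ(W_res r̃_{k-1} + W_in ṽ_k) for all k ∈ ℤ. If v_j = ṽ_j for all j ≤ k, then r_k = r̃_k. (The input-to-state map is causal.) -/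
open scoped NNReal

/-- **Causality of the input-to-state map.**
Under the ESP contraction condition, if two bounded inputs agree at all times `j ≤ k`,
the corresponding unique bounded reservoir trajectories agree at time `k`. -/
theorem reservoir_input_state_map_causal {nr nv : ℕ}
    (σ : EuclideanSpace ℝ (Fin nr) → EuclideanSpace ℝ (Fin nr)) (Lσ : ℝ≥0)
    (hσ : LipschitzWith Lσ σ)
    (Wres : EuclideanSpace ℝ (Fin nr) →L[ℝ] EuclideanSpace ℝ (Fin nr))
    (Win : EuclideanSpace ℝ (Fin nv) →L[ℝ] EuclideanSpace ℝ (Fin nr))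
    (hcontr : (Lσ : ℝ) * ‖Wres‖ < 1)
    (v v' : ℤ → EuclideanSpace ℝ (Fin nv))
    (hv : ∃ M : ℝ, ∀ k : ℤ, ‖v k‖ ≤ M)
    (hv' : ∃ M : ℝ, ∀ k : ℤ, ‖v' k‖ ≤ M)
    (r r' : ℤ → EuclideanSpace ℝ (Fin nr))
    (hrbdd : ∃ M : ℝ, ∀ k : ℤ, ‖r k‖ ≤ M)
    (hr'bdd : ∃ M : ℝ, ∀ k : ℤ, ‖r' k‖ ≤ M)
    (hr : ∀ k : ℤ, r k = σ (Wres (r (k - 1)) + Win (v k)))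
    (hr' : ∀ k : ℤ, r' k = σ (Wres (r' (k - 1)) + Win (v' k)))
    (k : ℤ) (hagree : ∀ j : ℤ, j ≤ k → v j = v' j) :
    r k = r' k := by
  obtain ⟨M, hM⟩ := hrbdd
  obtain ⟨M', hM'⟩ := hr'bdd
  have hq0 : 0 ≤ (Lσ : ℝ) * ‖Wres‖ := by positivity
  have step : ∀ j : ℤ, j ≤ k →
      ‖r j - r' j‖ ≤ ((Lσ : ℝ) * ‖Wres‖) * ‖r (j - 1) - r' (j - 1)‖ := by
    intro j hj
    rw [hr j, hr' j, hagree j hj]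
    refine (hσ.norm_sub_le _ _).trans ?_
    rw [add_sub_add_right_eq_sub, ← map_sub, mul_assoc]
    exact mul_le_mul_of_nonneg_left (Wres.le_opNorm _) Lσ.coe_nonneg
  have main : ∀ n : ℕ, ∀ j : ℤ, j ≤ k →
      ‖r j - r' j‖ ≤ ((Lσ : ℝ) * ‖Wres‖) ^ n * (M + M') := by
    intro n
    induction n with
    | zero =>
      intro j _
      rw [pow_zero, one_mul]
      exact (norm_sub_le _ _).trans (add_le_add (hM j) (hM' j))
    | succ n ih =>
      intro j hj
      refine (step j hj).trans ?_
      rw [pow_succ', mul_assoc (_ * _) (_ ^ n)]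
      exact mul_le_mul_of_nonneg_left (ih (j - 1) (by omega)) hq0
  have lim := (tendsto_pow_atTop_nhds_zero_of_lt_one hq0 hcontr).mul_const (M + M')
  rw [zero_mul] at lim
  have h0 : ‖r k - r' k‖ ≤ 0 := ge_of_tendsto' lim (fun n => main n k le_rfl)
  exact sub_eq_zero.mp (norm_le_zero_iff.mp h0)
end

section
/- Let σ : ℝ^{n_r} → ℝ^{n_r} be Lipschitz with constant L_σ, let W_res, W_in satisfy γ := L_σ·‖W_res‖ < 1, and let v, ṽ : ℤ → ℝ^{n_v} be bounded input sequences with corresponding unique bounded trajectories r, r̃. Fix k ∈ ℤ and τ ∈ ℕ. If v_j = ṽ_j for all j with k − τ < j ≤ k, then ‖r_k − r̃_k‖ ≤ γ^τ · sup_j ‖r_j − r̃_j‖. (Fading-memory property: the lifted state's dependence on inputs older than τ steps is bounded by γ^τ.) -/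
open scoped NNReal

/-- **Fading-memory property.**
If two bounded inputs agree on the window `k - τ < j ≤ k`, then the corresponding
unique bounded trajectories satisfy `‖r k - r̃ k‖ ≤ γ^τ · sup_j ‖r j - r̃ j‖`,
where `γ = Lσ·‖W_res‖ < 1`. -/
theorem reservoir_fading_memory {nr nv : ℕ}
    (σ : EuclideanSpace ℝ (Fin nr) → EuclideanSpace ℝ (Fin nr)) (Lσ : ℝ≥0)
    (hσ : LipschitzWith Lσ σ)
    (Wres : EuclideanSpace ℝ (Fin nr) →L[ℝ] EuclideanSpace ℝ (Fin nr))
    (Win : EuclideanSpace ℝ (Fin nv) →L[ℝ] EuclideanSpace ℝ (Fin nr))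
    (γ : ℝ) (hγ : γ = (Lσ : ℝ) * ‖Wres‖) (hcontr : γ < 1)
    (v v' : ℤ → EuclideanSpace ℝ (Fin nv))
    (hv : ∃ M : ℝ, ∀ k : ℤ, ‖v k‖ ≤ M)
    (hv' : ∃ M : ℝ, ∀ k : ℤ, ‖v' k‖ ≤ M)
    (r r' : ℤ → EuclideanSpace ℝ (Fin nr))
    (hrbdd : ∃ M : ℝ, ∀ k : ℤ, ‖r k‖ ≤ M)
    (hr'bdd : ∃ M : ℝ, ∀ k : ℤ, ‖r' k‖ ≤ M)
    (hr : ∀ k : ℤ, r k = σ (Wres (r (k - 1)) + Win (v k)))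
    (hr' : ∀ k : ℤ, r' k = σ (Wres (r' (k - 1)) + Win (v' k)))
    (k : ℤ) (τ : ℕ)
    (hagree : ∀ j : ℤ, k - τ < j → j ≤ k → v j = v' j) :
    ‖r k - r' k‖ ≤ γ ^ τ * ⨆ j : ℤ, ‖r j - r' j‖ := by
  have hγ0 : 0 ≤ γ := by rw [hγ]; positivity
  have hB : BddAbove (Set.range fun j : ℤ => ‖r j - r' j‖) := by
    obtain ⟨M, hM⟩ := hrbdd
    obtain ⟨M', hM'⟩ := hr'bdd
    refine ⟨M + M', ?_⟩
    rintro _ ⟨j, rfl⟩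
    exact (norm_sub_le _ _).trans (add_le_add (hM j) (hM' j))
  induction τ generalizing k with
  | zero => simpa using le_ciSup hB k
  | succ n ih =>
    have h1 := ih (k - 1) (fun j h1 h2 => hagree j (by push_cast; lia) (by lia))
    have h2 : ‖r k - r' k‖ ≤ γ * ‖r (k - 1) - r' (k - 1)‖ := by
      rw [hr k, hr' k, hagree k (by push_cast; lia) le_rfl]
      refine (hσ.norm_sub_le _ _).trans ?_
      rw [add_sub_add_right_eq_sub, ← map_sub, hγ, mul_assoc]
      exact mul_le_mul_of_nonneg_left (Wres.le_opNorm _) Lσ.coe_nonneg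
    calc ‖r k - r' k‖ ≤ γ * ‖r (k - 1) - r' (k - 1)‖ := h2
      _ ≤ γ * (γ ^ n * ⨆ j : ℤ, ‖r j - r' j‖) := mul_le_mul_of_nonneg_left h1 hγ0
      _ = γ ^ (n + 1) * ⨆ j : ℤ, ‖r j - r' j‖ := by ring
end

section
/- Let σ : ℝ^{n_r} → ℝ^{n_r} be Lipschitz with constant L_σ, and let W_res, W_in satisfy γ := L_σ·‖W_res‖ < 1. For bounded inputs v, ṽ : ℤ → ℝ^{n_v} with unique bounded trajectories r, r̃, one has sup_k ‖r_k − r̃_k‖ ≤ (L_σ·‖W_in‖ / (1 − γ)) · sup_k ‖v_k − ṽ_k‖. (The input-history-to-state map is globally Lipschitz in the supremum norm.) -/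
open scoped NNReal

/-- **Global Lipschitz continuity of the input-history-to-state map.**
Under `γ = Lσ·‖W_res‖ < 1`, the unique bounded trajectories `r, r̃` driven by bounded
inputs `v, ṽ` satisfy `sup_k ‖r k - r̃ k‖ ≤ (Lσ·‖W_in‖/(1-γ)) · sup_k ‖v k - ṽ k‖`. -/
theorem reservoir_input_to_state_lipschitz {nr nv : ℕ}
    (σ : EuclideanSpace ℝ (Fin nr) → EuclideanSpace ℝ (Fin nr)) (Lσ : ℝ≥0)
    (hσ : LipschitzWith Lσ σ)
    (Wres : EuclideanSpace ℝ (Fin nr) →L[ℝ] EuclideanSpace ℝ (Fin nr))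
    (Win : EuclideanSpace ℝ (Fin nv) →L[ℝ] EuclideanSpace ℝ (Fin nr))
    (γ : ℝ) (hγ : γ = (Lσ : ℝ) * ‖Wres‖) (hcontr : γ < 1)
    (v v' : ℤ → EuclideanSpace ℝ (Fin nv))
    (hv : ∃ M : ℝ, ∀ k : ℤ, ‖v k‖ ≤ M)
    (hv' : ∃ M : ℝ, ∀ k : ℤ, ‖v' k‖ ≤ M)
    (r r' : ℤ → EuclideanSpace ℝ (Fin nr))
    (hrbdd : ∃ M : ℝ, ∀ k : ℤ, ‖r k‖ ≤ M)
    (hr'bdd : ∃ M : ℝ, ∀ k : ℤ, ‖r' k‖ ≤ M)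
    (hr : ∀ k : ℤ, r k = σ (Wres (r (k - 1)) + Win (v k)))
    (hr' : ∀ k : ℤ, r' k = σ (Wres (r' (k - 1)) + Win (v' k))) :
    (⨆ k : ℤ, ‖r k - r' k‖) ≤
      (Lσ : ℝ) * ‖Win‖ / (1 - γ) * ⨆ k : ℤ, ‖v k - v' k‖ := by
  have bdd : ∀ {n : ℕ} (a b : ℤ → EuclideanSpace ℝ (Fin n)),
      (∃ M : ℝ, ∀ k : ℤ, ‖a k‖ ≤ M) → (∃ M : ℝ, ∀ k : ℤ, ‖b k‖ ≤ M) →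
      BddAbove (Set.range fun k : ℤ => ‖a k - b k‖) := by
    rintro n a b ⟨A, hA⟩ ⟨B, hB⟩
    refine ⟨A + B, ?_⟩
    rintro _ ⟨k, rfl⟩
    exact (norm_sub_le _ _).trans (add_le_add (hA k) (hB k))
  have h1 := bdd r r' hrbdd hr'bdd
  have h2 := bdd v v' hv hv'
  set S := ⨆ k : ℤ, ‖r k - r' k‖ with hS
  set T := ⨆ k : ℤ, ‖v k - v' k‖ with hT
  have key : S ≤ γ * S + Lσ * ‖Win‖ * T := by
    refine ciSup_le fun k => ?_
    have e1 : ‖r (k - 1) - r' (k - 1)‖ ≤ S := le_ciSup h1 (k - 1)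
    have e2 : ‖v k - v' k‖ ≤ T := le_ciSup h2 k
    have e3 : ‖r k - r' k‖ ≤ Lσ * ‖(Wres (r (k - 1)) + Win (v k)) -
        (Wres (r' (k - 1)) + Win (v' k))‖ := by
      rw [hr k, hr' k]
      exact hσ.norm_sub_le _ _
    have e4 : (Wres (r (k - 1)) + Win (v k)) - (Wres (r' (k - 1)) + Win (v' k))
        = Wres (r (k - 1) - r' (k - 1)) + Win (v k - v' k) := by
      rw [map_sub, map_sub]; abel
    rw [e4] at e3
    calc ‖r k - r' k‖ ≤ _ := e3
      _ ≤ Lσ * (‖Wres‖ * S + ‖Win‖ * T) := by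
        refine mul_le_mul_of_nonneg_left ?_ Lσ.2
        refine (norm_add_le _ _).trans (add_le_add ?_ ?_)
        · exact Wres.le_opNorm_of_le e1
        · exact Win.le_opNorm_of_le e2
      _ = _ := by rw [hγ]; ring
  have hpos : 0 < 1 - γ := by linarith
  rw [div_mul_eq_mul_div, le_div_iff₀ hpos]
  linarith
end

section
/- Let σ : ℝ^{n_r} → ℝ^{n_r} be Lipschitz with constant L_σ, let W_res, W_in satisfy γ := L_σ·‖W_res‖ < 1, let v : ℤ → ℝ^{n_v} be a bounded input sequence with unique bounded trajectory r* : ℤ → ℝ^{n_r}, and let r be any forward trajectory driven by the same inputs from an arbitrary state r_0 at time 0 (r_k = σ(W_res r_{k-1} + W_in v_k) for k ≥ 1). Then ‖r_k − r*_k‖ ≤ γ^k · ‖r_0 − r*_0‖ for all k ∈ ℕ; hence every forward trajectory converges exponentially to the unique bounded trajectory, regardless of its initial condition. -/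
open scoped NNReal

/-- **Exponential convergence to the unique bounded trajectory.**
Let `γ = Lσ·‖W_res‖ < 1`, let `r*` be the unique bounded trajectory on `ℤ` driven by
the bounded input `v`, and let `r : ℕ → ℝ^{n_r}` be any forward trajectory driven by
the same inputs from an arbitrary state `r 0` at time `0`. Then
`‖r k - r* k‖ ≤ γ^k · ‖r 0 - r* 0‖` for all `k ∈ ℕ`. -/
theorem forward_trajectory_converges_to_bounded {nr nv : ℕ}
    (σ : EuclideanSpace ℝ (Fin nr) → EuclideanSpace ℝ (Fin nr)) (Lσ : ℝ≥0)
    (hσ : LipschitzWith Lσ σ)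
    (Wres : EuclideanSpace ℝ (Fin nr) →L[ℝ] EuclideanSpace ℝ (Fin nr))
    (Win : EuclideanSpace ℝ (Fin nv) →L[ℝ] EuclideanSpace ℝ (Fin nr))
    (γ : ℝ) (hγ : γ = (Lσ : ℝ) * ‖Wres‖) (hcontr : γ < 1)
    (v : ℤ → EuclideanSpace ℝ (Fin nv)) (hv : ∃ M : ℝ, ∀ k : ℤ, ‖v k‖ ≤ M)
    (rstar : ℤ → EuclideanSpace ℝ (Fin nr))
    (hstarbdd : ∃ M : ℝ, ∀ k : ℤ, ‖rstar k‖ ≤ M)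
    (hstar : ∀ k : ℤ, rstar k = σ (Wres (rstar (k - 1)) + Win (v k)))
    (r : ℕ → EuclideanSpace ℝ (Fin nr))
    (hr : ∀ k : ℕ, r (k + 1) = σ (Wres (r k) + Win (v (k + 1)))) :
    ∀ k : ℕ, ‖r k - rstar k‖ ≤ γ ^ k * ‖r 0 - rstar 0‖ := by
  intro k
  induction k with
  | zero => simp
  | succ k ih =>
    have h1 : rstar ((k + 1 : ℕ) : ℤ) = σ (Wres (rstar (k : ℤ)) + Win (v ((k : ℤ) + 1))) := by
      have h := hstar ((k : ℤ) + 1)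
      rw [add_sub_cancel_right] at h
      rw [← h]
      push_cast
      rfl
    have hγ0 : 0 ≤ γ := by rw [hγ]; positivity
    rw [h1, hr k]
    calc _ ≤ (Lσ : ℝ) * ‖(Wres (r k) + Win (v ((k : ℤ) + 1)))
              - (Wres (rstar (k : ℤ)) + Win (v ((k : ℤ) + 1)))‖ := hσ.norm_sub_le _ _
      _ = (Lσ : ℝ) * ‖Wres (r k - rstar (k : ℤ))‖ := by
          rw [add_sub_add_right_eq_sub, map_sub]
      _ ≤ (Lσ : ℝ) * (‖Wres‖ * ‖r k - rstar (k : ℤ)‖) := by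
          gcongr
          exact Wres.le_opNorm _
      _ = γ * ‖r k - rstar (k : ℤ)‖ := by rw [hγ]; ring
      _ ≤ γ * (γ ^ k * ‖r 0 - rstar 0‖) := by gcongr
      _ = γ ^ (k + 1) * ‖r 0 - rstar 0‖ := by ring
end
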